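/- arXiv:math/0204087 — 2 statements merged into one kernel-verified Lean document; each statement's English description precedes it below -/
import Mathlib

section
/- Let λ > 2 and let (P̃_{λ,n})_{n≥0} be the monic polynomials defined by P̃_{λ,0}(s) = 1, P̃_{λ,−1} := 0, and s P̃_{λ,n}(s) = P̃_{λ,n+1}(s) + λ(n+1) P̃_{λ,n}(s) + n(n+1) P̃_{λ,n−1}(s). Then for all n, m ≥ 0: (λ² − 4) Σ_{k=1}^∞ k p_λ^k P̃_{λ,n}(q k) P̃_{λ,m}(q k) = 0 if n ≠ m, and equals n! · (n+1)! if n = m, where q := √(λ²−4) and p_λ := (λ−q)/(λ+q). -/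
open MeasureTheory

/-!
Write `λ = u + v` and `1 = u v`, so that `q = u - v` and `p = v / u`. The generating function
`∑ Pₙ(q x) tⁿ / n! = (1 + u t) ^ (x - 1) * (1 + v t) ^ (-x - 1)` yields the shift relation
`v (x + 1) Pₙ(q (x + 1)) = u (x - 1 - n) Pₙ(q x) - Pₙ₊₁(q x)`. Summed against the Pascal weight
`k pᵏ`, the terms `v (x + 1) Pₙ(q (x + 1))` and `u (x - 1) Pₙ(q x)` cancel by a shift of the
summation index, so the integral of `Pₙ₊₁` is `-n u` times that of `Pₙ`, hence zero for every `n`.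
A linear functional that kills every member but the first of a sequence with a three-term recurrence
makes the sequence orthogonal.
-/

open Polynomial

section ThreeTermRecurrence

variable {R A : Type*} [CommRing R] [CommRing A] [Algebra R A] {b c : ℕ → R} {x : A} {P : ℕ → A}

lemma map_mul_succ_of_threeTerm (L : A →ₗ[R] R)
    (hrec : ∀ n, x * P n = P (n + 1) + b n • P n + c n • P (n - 1)) (m n : ℕ) :
    L (P (m + 1) * P n) = L (P m * P (n + 1)) + (b n - b m) * L (P m * P n) +
      c n * L (P m * P (n - 1)) - c m * L (P (m - 1) * P n) := by
  have expand : P (m + 1) * P n = P m * P (n + 1) + (b n - b m) • (P m * P n) +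
      c n • (P m * P (n - 1)) - c m • (P (m - 1) * P n) := by
    have hm := hrec m
    have hn := hrec n
    simp only [Algebra.smul_def, map_sub] at hm hn ⊢
    linear_combination P m * hn - P n * hm
  simp only [expand, map_add, map_sub, map_smul, smul_eq_mul]

lemma map_mul_eq_zero_of_threeTerm_of_lt {L : A →ₗ[R] R} (h0 : P 0 = 1)
    (hrec : ∀ n, x * P n = P (n + 1) + b n • P n + c n • P (n - 1))
    (hL : ∀ n, L (P (n + 1)) = 0) {m n : ℕ} (hmn : m < n) :
    L (P m * P n) = 0 := by
  induction m using Nat.strong_induction_on generalizing n with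
  | _ m ih =>
    rcases m with _ | m
    · obtain ⟨n, rfl⟩ := Nat.exists_eq_add_one.mpr hmn
      rw [h0, one_mul, hL]
    · rw [map_mul_succ_of_threeTerm L hrec, ih m (by lia) (by lia), ih m (by lia) (by lia),
        ih m (by lia) (by lia), ih (m - 1) (by lia) (by lia)]
      ring

lemma map_mul_eq_zero_of_threeTerm_of_ne {L : A →ₗ[R] R} (h0 : P 0 = 1)
    (hrec : ∀ n, x * P n = P (n + 1) + b n • P n + c n • P (n - 1))
    (hL : ∀ n, L (P (n + 1)) = 0) {m n : ℕ} (hmn : m ≠ n) :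
    L (P m * P n) = 0 := by
  rcases hmn.lt_or_gt with h | h
  · exact map_mul_eq_zero_of_threeTerm_of_lt h0 hrec hL h
  · rw [mul_comm]
    exact map_mul_eq_zero_of_threeTerm_of_lt h0 hrec hL h

lemma map_mul_self_of_threeTerm {L : A →ₗ[R] R} (h0 : P 0 = 1)
    (hrec : ∀ n, x * P n = P (n + 1) + b n • P n + c n • P (n - 1))
    (hL : ∀ n, L (P (n + 1)) = 0) (n : ℕ) :
    L (P n * P n) = (∏ i ∈ Finset.range n, c (i + 1)) * L 1 := by
  induction n with
  | zero => simp [h0]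
  | succ n ih =>
    have orthogonal {i j : ℕ} (hij : i < j) : L (P i * P j) = 0 :=
      map_mul_eq_zero_of_threeTerm_of_lt h0 hrec hL hij
    rw [map_mul_succ_of_threeTerm L hrec, Nat.add_sub_cancel, ih, orthogonal (by lia),
      orthogonal (by lia), orthogonal (by lia), Finset.prod_range_succ]
    ring

end ThreeTermRecurrence

/-- The sequence `a` takes the values at `s` of the monic Meixner polynomials with parameters `u`
and `v`, characterized by their three-term recurrence. At `n = 0` the value `a (n - 1)` is
irrelevant because its coefficient vanishes. The polynomials of the paper are those with
`u + v = λ` and `u * v = 1`; the polynomials themselves are the case `s = X`. -/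
structure IsMeixnerSeq {A : Type*} [CommRing A] (u v s : A) (a : ℕ → A) : Prop where
  zero : a 0 = 1
  mul_eq (n : ℕ) : s * a n =
    a (n + 1) + (u + v) * (n + 1) * a n + n * (n + 1) * (u * v) * a (n - 1)

namespace IsMeixnerSeq

variable {A B : Type*} [CommRing A] [CommRing B] {u v s x : A} {a b : ℕ → A}

lemma map (ha : IsMeixnerSeq u v s a) (f : A →+* B) :
    IsMeixnerSeq (f u) (f v) (f s) (fun n ↦ f (a n)) where
  zero := by rw [ha.zero, map_one]
  mul_eq n := by simpa using congrArg f (ha.mul_eq n)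

lemma one (ha : IsMeixnerSeq u v s a) : a 1 = s - (u + v) := by
  have h := ha.mul_eq 0
  simp only [ha.zero, Nat.cast_zero, zero_add, zero_mul] at h
  linear_combination -h

lemma add_two (ha : IsMeixnerSeq u v s a) (n : ℕ) :
    a (n + 2) = (s - (u + v) * (n + 2)) * a (n + 1) - (n + 1) * (n + 2) * (u * v) * a n := by
  have h := ha.mul_eq (n + 1)
  push_cast [Nat.add_sub_cancel] at h
  linear_combination -h

/-- The generating function `F x = (1 + u t) ^ (x - 1) * (1 + v t) ^ (-x - 1)` satisfies
`(1 + u t) * ∂F x / ∂t = u (x - 1) F x - v (x + 1) F (x + 1)`; this compares coefficients. -/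
lemma shift (ha : IsMeixnerSeq u v ((u - v) * x) a)
    (hb : IsMeixnerSeq u v ((u - v) * (x + 1)) b) (n : ℕ) :
    v * (x + 1) * b n = u * (x - 1 - n) * a n - a (n + 1) := by
  induction n using Nat.twoStepInduction with
  | zero =>
    rw [hb.zero, ha.zero, zero_add, ha.one]
    push_cast
    ring
  | one =>
    rw [hb.one, ha.add_two 0, ha.one, ha.zero]
    push_cast
    ring
  | more n ih₀ ih₁ =>
    have ha₂ := ha.add_two n
    have ha₃ := ha.add_two (n + 1)
    rw [hb.add_two]
    push_cast at ih₁ ha₃ ⊢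
    linear_combination ((u - v) * (x + 1) - (u + v) * (n + 2)) * ih₁
      - (n + 1) * (n + 2) * (u * v) * ih₀ - u * (x - 1 - n) * ha₂ + ha₃

end IsMeixnerSeq

lemma prod_range_succ_mul_succ_succ_mul {R : Type*} [CommSemiring R] (a : R) (n : ℕ) :
    ∏ i ∈ Finset.range n, ((i + 1 : ℕ) : R) * ((i + 1 : ℕ) + 1) * a =
      n.factorial * (n + 1).factorial * a ^ n := by
  induction n with
  | zero => simp
  | succ n ih =>
    rw [Finset.prod_range_succ, ih, Nat.factorial_succ (n + 1), Nat.factorial_succ n]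
    push_cast
    ring

section PascalFunctional

variable {𝕜 : Type*} [NormedField 𝕜] {r u v : 𝕜}

lemma summable_coe_mul_geometric_mul_eval (hr : ‖r‖ < 1) (f : 𝕜[X]) :
    Summable fun k : ℕ ↦ (k : 𝕜) * r ^ k * f.eval (k : 𝕜) := by
  induction f using Polynomial.induction_on' with
  | add f g hf hg => simpa only [eval_add, mul_add] using hf.add hg
  | monomial n a =>
    refine ((summable_pow_mul_geometric_of_norm_lt_one (n + 1) hr).mul_left a).congr fun k ↦ ?_
    rw [eval_monomial]
    ring

/-- Integration of polynomials against the Pascal-type measure `∑ k, k * r ^ k • δ_k`. The bound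
on `r` is an argument since linearity relies on the convergence of the series. -/
noncomputable def pascalFunctional (hr : ‖r‖ < 1) : 𝕜[X] →ₗ[𝕜] 𝕜 where
  toFun f := ∑' k : ℕ, (k : 𝕜) * r ^ k * f.eval (k : 𝕜)
  map_add' f g := by
    simp only [eval_add, mul_add]
    exact (summable_coe_mul_geometric_mul_eval hr f).tsum_add
      (summable_coe_mul_geometric_mul_eval hr g)
  map_smul' a f := by
    simp only [eval_smul, smul_eq_mul, mul_left_comm _ a, tsum_mul_left, RingHom.id_apply]

lemma pascalFunctional_apply (hr : ‖r‖ < 1) (f : 𝕜[X]) :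
    pascalFunctional hr f = ∑' k : ℕ, (k : 𝕜) * r ^ k * f.eval (k : 𝕜) := rfl

lemma pascalFunctional_one (hr : ‖r‖ < 1) : pascalFunctional hr 1 = r / (1 - r) ^ 2 := by
  simpa [pascalFunctional_apply] using tsum_coe_mul_geometric_of_norm_lt_one hr

lemma pascalFunctional_X_sub_one_mul (hr : ‖r‖ < 1) (f : 𝕜[X]) :
    pascalFunctional hr ((X - 1) * f) = r * pascalFunctional hr ((X + 1) * f.comp (X + 1)) := by
  rw [pascalFunctional_apply, pascalFunctional_apply,
    (summable_coe_mul_geometric_mul_eval hr _).tsum_eq_zero_add, ← tsum_mul_left]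
  simp only [Nat.cast_zero, zero_mul, zero_add]
  refine tsum_congr fun k ↦ ?_
  simp only [eval_mul, eval_sub, eval_add, eval_comp, eval_X, eval_one, Nat.cast_add, Nat.cast_one]
  ring

variable {Q : ℕ → 𝕜[X]}

lemma IsMeixnerSeq.pascalFunctional_succ (hr : ‖r‖ < 1) (hv : v = r * u)
    (hQ : IsMeixnerSeq (C u) (C v) ((C u - C v) * X) Q) (n : ℕ) :
    pascalFunctional hr (Q (n + 1)) = -(n * u) * pascalFunctional hr (Q n) := by
  have hQ_comp : IsMeixnerSeq (C u) (C v) ((C u - C v) * (X + 1)) fun n ↦ (Q n).comp (X + 1) := by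
    simpa using hQ.map (compRingHom (X + 1))
  have expand : Q (n + 1) = u • ((X - 1) * Q n) - (n * u) • Q n -
      v • ((X + 1) * (Q n).comp (X + 1)) := by
    simp only [smul_eq_C_mul, C_mul, C_eq_natCast]
    linear_combination hQ.shift hQ_comp n
  rw [expand, map_sub, map_sub, map_smul, map_smul, map_smul, pascalFunctional_X_sub_one_mul, hv]
  simp only [smul_eq_mul]
  ring

lemma IsMeixnerSeq.pascalFunctional_succ_eq_zero (hr : ‖r‖ < 1) (hv : v = r * u)
    (hQ : IsMeixnerSeq (C u) (C v) ((C u - C v) * X) Q) (n : ℕ) :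
    pascalFunctional hr (Q (n + 1)) = 0 := by
  induction n with
  | zero => simp [hQ.pascalFunctional_succ hr hv]
  | succ n ih => rw [hQ.pascalFunctional_succ hr hv, ih, mul_zero]

lemma IsMeixnerSeq.pascalFunctional_mul (hr : ‖r‖ < 1) (hv : v = r * u)
    (hQ : IsMeixnerSeq (C u) (C v) ((C u - C v) * X) Q) (n m : ℕ) :
    pascalFunctional hr (Q n * Q m) =
      if n = m then n.factorial * (n + 1).factorial * (u * v) ^ n * (r / (1 - r) ^ 2) else 0 := by
  have hrec (n : ℕ) : (C u - C v) * X * Q n = Q (n + 1) + ((u + v) * (n + 1)) • Q n +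
      ((n : 𝕜) * (n + 1) * (u * v)) • Q (n - 1) := by
    simpa [smul_eq_C_mul] using hQ.mul_eq n
  have hzero := hQ.pascalFunctional_succ_eq_zero hr hv
  split_ifs with hnm
  · rw [← hnm, map_mul_self_of_threeTerm hQ.zero hrec hzero, pascalFunctional_one,
      prod_range_succ_mul_succ_succ_mul]
  · exact map_mul_eq_zero_of_threeTerm_of_ne hQ.zero hrec hzero hnm

end PascalFunctional

theorem meixner_pascal_orthogonality_general {𝕜 : Type*} [NormedField 𝕜]
    {u v : 𝕜} (huv : ‖v‖ < ‖u‖) {P : ℕ → 𝕜[X]} (hP : IsMeixnerSeq (C u) (C v) X P) (n m : ℕ) :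
    (u - v) ^ 2 *
        ∑' k : ℕ, (k : 𝕜) * (v / u) ^ k * (P n).eval ((u - v) * k) * (P m).eval ((u - v) * k) =
      if n = m then n.factorial * (n + 1).factorial * (u * v) ^ (n + 1) else 0 := by
  have hu : u ≠ 0 := norm_pos_iff.mp ((norm_nonneg v).trans_lt huv)
  have huv_sub : u - v ≠ 0 := sub_ne_zero.mpr fun h ↦ huv.ne' (congrArg norm h)
  have hr : ‖v / u‖ < 1 := by rwa [norm_div, div_lt_one (norm_pos_iff.mpr hu)]
  have hQ : IsMeixnerSeq (C u) (C v) ((C u - C v) * X) fun n ↦ (P n).comp ((C u - C v) * X) := by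
    simpa using hP.map (compRingHom ((C u - C v) * X))
  have total_mass : (u - v) ^ 2 * (v / u / (1 - v / u) ^ 2) = u * v := by
    rw [one_sub_div hu]
    field_simp
  have integral := hQ.pascalFunctional_mul hr (div_mul_cancel₀ v hu).symm n m
  simp only [pascalFunctional_apply, eval_mul, eval_comp, eval_sub, eval_C, eval_X,
    ← mul_assoc] at integral
  rw [integral, mul_ite, mul_zero]
  congr 1
  linear_combination (n.factorial * (n + 1).factorial * (u * v) ^ n : 𝕜) * total_mass

lemma exists_add_eq_mul_eq_one_sub_eq_sqrt {t : ℝ} (ht : 2 < t) :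
    ∃ u v : ℝ, u + v = t ∧ u * v = 1 ∧ u - v = √(t ^ 2 - 4) ∧ ‖v‖ < ‖u‖ := by
  have hpos : 0 < t ^ 2 - 4 := by nlinarith
  have hsqrt_pos : 0 < √(t ^ 2 - 4) := Real.sqrt_pos.mpr hpos
  have hsq : √(t ^ 2 - 4) ^ 2 = t ^ 2 - 4 := Real.sq_sqrt hpos.le
  refine ⟨(t + √(t ^ 2 - 4)) / 2, (t - √(t ^ 2 - 4)) / 2, by ring, by linear_combination -hsq / 4,
    by ring, ?_⟩
  rw [Real.norm_eq_abs, Real.norm_eq_abs, ← sq_lt_sq]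
  nlinarith

/-- For `λ > 2`, the monic polynomials defined by `P₀ = 1` and the Meixner recurrence
`s P_n(s) = P_{n+1}(s) + λ(n+1) P_n(s) + n(n+1) P_{n-1}(s)` are orthogonal with respect
to the Pascal-type measure `(λ²-4) Σ_{k≥1} k p_λ^k δ_{qk}`, with squared norm `n!(n+1)!`. -/
theorem meixner_pascal_orthogonality
    (lam : ℝ) (hlam : 2 < lam) (q p : ℝ)
    (hq : q = Real.sqrt (lam ^ 2 - 4)) (hp : p = (lam - q) / (lam + q))
    (P : ℕ → Polynomial ℝ) (h0 : P 0 = 1)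
    (hrec : ∀ (n : ℕ) (s : ℝ), s * (P n).eval s =
      (P (n + 1)).eval s + lam * ((n : ℝ) + 1) * (P n).eval s +
        (n : ℝ) * ((n : ℝ) + 1) * (P (n - 1)).eval s) :
    (∀ n m : ℕ, n ≠ m →
      (lam ^ 2 - 4) * ∑' k : ℕ, (k : ℝ) * p ^ k * (P n).eval (q * k) * (P m).eval (q * k)
        = 0) ∧
    (∀ n : ℕ,
      (lam ^ 2 - 4) * ∑' k : ℕ, (k : ℝ) * p ^ k * ((P n).eval (q * k)) ^ 2
        = (Nat.factorial n : ℝ) * (Nat.factorial (n + 1))) := by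
  obtain ⟨u, v, rfl, huv, hsub, hnorm⟩ := exists_add_eq_mul_eq_one_sub_eq_sqrt hlam
  obtain rfl : q = u - v := hq.trans hsub.symm
  obtain rfl : p = v / u := by
    rw [hp, add_sub_sub_cancel, add_add_sub_cancel, ← two_mul, ← two_mul,
      mul_div_mul_left _ _ two_ne_zero]
  have hP : IsMeixnerSeq (C u) (C v) X P :=
    ⟨h0, fun n ↦ Polynomial.funext fun s ↦ by simpa [huv] using hrec n s⟩
  have hsq : (u + v) ^ 2 - 4 = (u - v) ^ 2 := by linear_combination 4 * huv
  have orthogonality := meixner_pascal_orthogonality_general hnorm hP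
  rw [hsq]
  refine ⟨fun n m hnm ↦ ?_, fun n ↦ ?_⟩
  · rw [orthogonality, if_neg hnm]
  · simpa [huv, sq, mul_assoc] using orthogonality n n
end

section
/- For every t ∈ ℝ, the integral ∫_0^∞ (e^{its} − 1) s^{−1} e^{−s} ds converges and equals −Log(1 − it), where Log denotes the principal branch of the complex logarithm. -/
/-!
Frullani's argument: by the fundamental theorem of calculus along the segment from `a` to `b`,
`(e^{-as} - e^{-bs}) / s = (b - a) ∫₀¹ e^{-(a + u(b - a))s} du`. When `a` and `b` lie in the right
half-plane, so does the segment, and the kernel decays exponentially in `s`, uniformly in `u`.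
By Fubini's theorem and `∫₀^∞ e^{-zs} ds = z⁻¹`, the integral over `s` is
`(b - a) ∫₀¹ (a + u(b - a))⁻¹ du = Log b - Log a`, since the segment avoids the branch cut.
The gamma exponent is the case `a = 1 - it`, `b = 1`.
-/

open MeasureTheory

lemma add_smul_sub_mem_segment {E : Type*} [AddCommGroup E] [Module ℝ E] {x y : E} {u : ℝ}
    (hu : u ∈ Set.Icc (0 : ℝ) 1) : x + u • (y - x) ∈ segment ℝ x y := by
  rw [segment_eq_image']
  exact Set.mem_image_of_mem _ hu

section Segment

variable {a b : ℂ}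

lemma min_re_le_re_of_mem_segment {z : ℂ} (hz : z ∈ segment ℝ a b) : min a.re b.re ≤ z.re :=
  (convex_halfSpace_re_ge (min a.re b.re)).segment_subset (min_le_left a.re _)
    (min_le_right _ b.re) hz

lemma re_pos_of_mem_segment (ha : 0 < a.re) (hb : 0 < b.re) {z : ℂ} (hz : z ∈ segment ℝ a b) :
    0 < z.re :=
  (lt_min ha hb).trans_le (min_re_le_re_of_mem_segment hz)

lemma integral_exp_neg_mul_segment (a b : ℂ) {c : ℂ} (hc : c ≠ 0) :
    (b - a) * ∫ u in (0 : ℝ)..1, Complex.exp (-(a + u • (b - a)) * c) =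
      (Complex.exp (-a * c) - Complex.exp (-b * c)) / c := by
  have hderiv (z : ℂ) :
      HasDerivAt (fun z ↦ -Complex.exp (-z * c) / c) (Complex.exp (-z * c)) z := by
    refine (((hasDerivAt_id z).neg.mul_const c).cexp.neg.div_const c).congr_deriv ?_
    simp [hc]
  have hftc := intervalIntegral.integral_unitInterval_deriv_eq_sub (z₀ := a) (z₁ := b - a)
    (f' := fun z ↦ Complex.exp (-z * c)) (by fun_prop) (fun _ _ ↦ hderiv _)
  rw [smul_eq_mul, add_sub_cancel] at hftc
  rw [hftc]
  ring

lemma integral_inv_segment (h : segment ℝ a b ⊆ Complex.slitPlane) :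
    (b - a) * ∫ u in (0 : ℝ)..1, (a + u • (b - a))⁻¹ = Complex.log b - Complex.log a := by
  have hmem {u : ℝ} (hu : u ∈ Set.Icc (0 : ℝ) 1) : a + u • (b - a) ∈ Complex.slitPlane :=
    h (add_smul_sub_mem_segment hu)
  have hcont : ContinuousOn (fun u : ℝ ↦ (a + u • (b - a))⁻¹) (Set.Icc 0 1) :=
    ContinuousOn.inv₀ (by fun_prop) fun _ hu ↦ Complex.slitPlane_ne_zero (hmem hu)
  simpa using intervalIntegral.integral_unitInterval_deriv_eq_sub hcont fun _ hu ↦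
    Complex.hasDerivAt_log (hmem hu)

end Segment

lemma integral_exp_neg_mul_Ioi_zero {z : ℂ} (hz : 0 < z.re) :
    ∫ s in Set.Ioi (0 : ℝ), Complex.exp (-z * s) = z⁻¹ := by
  simpa using integral_exp_mul_complex_Ioi (a := -z) (by simpa using hz) 0

section Frullani

variable {a b : ℂ}

lemma norm_exp_neg_mul_segment_le {u s : ℝ} (hu : u ∈ Set.Icc (0 : ℝ) 1) (hs : 0 ≤ s) :
    ‖Complex.exp (-(a + u • (b - a)) * s)‖ ≤ Real.exp (-min a.re b.re * s) := by
  rw [Complex.norm_exp, Complex.re_mul_ofReal, Complex.neg_re]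
  gcongr
  exact min_re_le_re_of_mem_segment (add_smul_sub_mem_segment hu)

lemma integrable_exp_neg_mul_segment_prod (ha : 0 < a.re) (hb : 0 < b.re) :
    Integrable (Function.uncurry fun u s : ℝ ↦ Complex.exp (-(a + u • (b - a)) * s))
      ((volume.restrict (Set.Ioc 0 1)).prod (volume.restrict (Set.Ioi 0))) := by
  have hbound : IntegrableOn (fun s : ℝ ↦ Real.exp (-min a.re b.re * s)) (Set.Ioi 0) :=
    exp_neg_integrableOn_Ioi 0 (lt_min ha hb)
  refine (hbound.comp_snd (volume.restrict (Set.Ioc 0 1))).mono'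
    (by unfold Function.uncurry; fun_prop) ?_
  rw [Measure.prod_restrict]
  filter_upwards [ae_restrict_mem (measurableSet_Ioc.prod measurableSet_Ioi)] with p ⟨hu, hs⟩
  exact norm_exp_neg_mul_segment_le (Set.Ioc_subset_Icc_self hu) (le_of_lt hs)

theorem integrableOn_exp_neg_mul_sub_exp_neg_mul_div (ha : 0 < a.re) (hb : 0 < b.re) :
    IntegrableOn (fun s : ℝ ↦ (Complex.exp (-a * s) - Complex.exp (-b * s)) / s) (Set.Ioi 0) := by
  have hinner := (integrable_exp_neg_mul_segment_prod ha hb).integral_prod_right.const_mul (b - a)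
  refine IntegrableOn.congr_fun hinner (fun s hs ↦ ?_) measurableSet_Ioi
  rw [← integral_exp_neg_mul_segment a b (Complex.ofReal_ne_zero.2 (ne_of_gt hs)),
    intervalIntegral.integral_of_le zero_le_one]
  rfl

theorem integral_exp_neg_mul_sub_exp_neg_mul_div (ha : 0 < a.re) (hb : 0 < b.re) :
    ∫ s in Set.Ioi (0 : ℝ), (Complex.exp (-a * s) - Complex.exp (-b * s)) / s =
      Complex.log b - Complex.log a := by
  have hpos {z : ℂ} (hz : z ∈ segment ℝ a b) : 0 < z.re := re_pos_of_mem_segment ha hb hz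
  calc ∫ s in Set.Ioi (0 : ℝ), (Complex.exp (-a * s) - Complex.exp (-b * s)) / s
    _ = ∫ s in Set.Ioi (0 : ℝ),
          (b - a) * ∫ u in (0 : ℝ)..1, Complex.exp (-(a + u • (b - a)) * s) :=
      setIntegral_congr_fun measurableSet_Ioi fun s hs ↦
        (integral_exp_neg_mul_segment a b (Complex.ofReal_ne_zero.2 (ne_of_gt hs))).symm
    _ = (b - a) * ∫ u in (0 : ℝ)..1,
          ∫ s in Set.Ioi (0 : ℝ), Complex.exp (-(a + u • (b - a)) * s) := by
      have hint := integrable_exp_neg_mul_segment_prod ha hb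
      rw [← Set.uIoc_of_le zero_le_one] at hint
      rw [integral_const_mul, intervalIntegral_integral_swap hint]
    _ = (b - a) * ∫ u in (0 : ℝ)..1, (a + u • (b - a))⁻¹ := by
      congr 1
      refine intervalIntegral.integral_congr fun u hu ↦ ?_
      rw [Set.uIcc_of_le zero_le_one] at hu
      exact integral_exp_neg_mul_Ioi_zero (hpos (add_smul_sub_mem_segment hu))
    _ = Complex.log b - Complex.log a := integral_inv_segment fun _ hz ↦ Or.inl (hpos hz)

end Frullani

lemma exp_mul_sub_one_mul_exp_neg_div (z : ℂ) (s : ℝ) :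
    (Complex.exp (z * s) - 1) * ((Real.exp (-s) / s : ℝ) : ℂ) =
      (Complex.exp (-(1 - z) * s) - Complex.exp (-1 * s)) / s := by
  rw [show -(1 - z) * (s : ℂ) = z * s + -s by ring, Complex.exp_add, neg_one_mul]
  push_cast
  ring

theorem gamma_process_levy_khintchine_exponent_general {z : ℂ} (hz : z.re < 1) :
    IntegrableOn
      (fun s : ℝ ↦ (Complex.exp (z * s) - 1) * ((Real.exp (-s) / s : ℝ) : ℂ))
      (Set.Ioi 0) volume ∧
    (∫ s in Set.Ioi (0 : ℝ), (Complex.exp (z * s) - 1) * ((Real.exp (-s) / s : ℝ) : ℂ))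
      = -Complex.log (1 - z) := by
  have hre : 0 < (1 - z).re := by simpa using hz
  have hre_one : 0 < (1 : ℂ).re := by simp
  simp_rw [exp_mul_sub_one_mul_exp_neg_div]
  refine ⟨integrableOn_exp_neg_mul_sub_exp_neg_mul_div hre hre_one, ?_⟩
  rw [integral_exp_neg_mul_sub_exp_neg_mul_div hre hre_one, Complex.log_one, zero_sub]

/-- The Lévy–Khintchine exponent of the gamma process: for every `t ∈ ℝ`, the integral
`∫_0^∞ (e^{its} - 1) s⁻¹ e^{-s} ds` converges (absolutely) and equals `-Log(1 - it)`,
where `Log` is the principal branch of the complex logarithm. -/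
theorem gamma_process_levy_khintchine_exponent (t : ℝ) :
    IntegrableOn
      (fun s : ℝ => (Complex.exp (Complex.I * t * s) - 1) * ((Real.exp (-s) / s : ℝ) : ℂ))
      (Set.Ioi 0) volume ∧
    (∫ s in Set.Ioi (0 : ℝ),
        (Complex.exp (Complex.I * t * s) - 1) * ((Real.exp (-s) / s : ℝ) : ℂ))
      = -Complex.log (1 - Complex.I * t) :=
  gamma_process_levy_khintchine_exponent_general (by simp)
end
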